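/- (Lemma 5.7 (iii)) Let u : Θ → ℝ be bounded and d_p-uniformly continuous, n ≥ 1, and λ_i a fixed partition-jump datum. Then u^{n,λ_i} is lower semicontinuous at the initial time s_i: for every x ∈ ℝ^d, u^{n,λ_i}(s_i, x) ≤ liminf_{s' ↓ s_i, x' → x} u^{n,λ_i}(s', x'). -/

import Mathlib

open MeasureTheory Set Filter Topology

noncomputable section

/-- `ℝ^d` with the Euclidean norm. -/
abbrev E (d : ℕ) := EuclideanSpace ℝ (Fin d)

/-- A point `θ = (t, ω)` of `Θ = [0,T] × Ω`, where `Ω` is the set of continuous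
paths `[0,T] → ℝ^d` starting from the origin. -/
structure Theta (T : ℝ) (d : ℕ) where
  t : ℝ
  path : ℝ → E d
  ht : t ∈ Set.Icc 0 T
  cont : ContinuousOn path (Set.Icc 0 T)
  init : path 0 = 0

/-- `‖f‖_q^q := ‖f T‖^q + ∫_0^T ‖f s‖^q ds`. -/
def pnormPow (T q : ℝ) {d : ℕ} (f : ℝ → E d) : ℝ :=
  ‖f T‖ ^ q + ∫ s in (0:ℝ)..T, ‖f s‖ ^ q

/-- `‖f‖_q := (‖f T‖^q + ∫_0^T ‖f s‖^q ds)^(1/q)`. -/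
def pnorm (T q : ℝ) {d : ℕ} (f : ℝ → E d) : ℝ := (pnormPow T q f) ^ (1 / q)

/-- The pseudo-distance `d_p(θ,θ') = |t - t'| + ‖ω_{t∧·} - ω'_{t'∧·}‖_p`. -/
def dpDist (T p : ℝ) {d : ℕ} (θ θ' : Theta T d) : ℝ :=
  |θ.t - θ'.t| + pnorm T p (fun s => θ.path (min θ.t s) - θ'.path (min θ'.t s))

/-- The set `𝓛_{t,s}` of monotone time changes: for `s > 0`, nondecreasing
`ℓ : [0,T] → ℝ` restricting to an increasing bijection from `[0,t]` onto `[0,s]`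
with `ℓ(r) = r - t + s` on `(t,T]`; for `s = 0` the single function `ℓ^{t,0}`. -/
def LL (T t s : ℝ) : Set (ℝ → ℝ) :=
  if s = 0 then {fun r => if r ≤ t then 0 else r - t}
  else {ℓ | MonotoneOn ℓ (Set.Icc 0 T) ∧ StrictMonoOn ℓ (Set.Icc 0 t) ∧
        Set.BijOn ℓ (Set.Icc 0 t) (Set.Icc 0 s) ∧ ∀ r ∈ Set.Ioc t T, ℓ r = r - t + s}

/-- `‖ℓ - I‖_∞ := sup_{0 ≤ r ≤ T} |ℓ(r) - r|`. -/
def supId (T : ℝ) (ℓ : ℝ → ℝ) : ℝ := ⨆ r : Set.Icc (0:ℝ) T, |ℓ r - (r : ℝ)|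

/-- The penalization `Φ(s,η,θ,ℓ) := ‖ℓ - I‖_∞^{2/(3p+3)} + ‖η_{s∧ℓ(·)} - ω_{t∧·}‖_{p+1}^{p+1}`. -/
def Phi (T p : ℝ) {d : ℕ} (s : ℝ) (η : ℝ → E d) (θ : Theta T d) (ℓ : ℝ → ℝ) : ℝ :=
  (supId T ℓ) ^ (2 / (3 * p + 3)) +
    pnormPow T (p + 1) (fun r => η (min s (ℓ r)) - θ.path (min θ.t r))

/-- The regularization
`u^n(s,η) := sup { u(θ) - n Φ(s,η,θ,ℓ) : θ ∈ Θ \ {𝟎}, ℓ ∈ 𝓛_{t,s} }`. -/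
def reg (T p : ℝ) {d : ℕ} (u : Theta T d → ℝ) (n : ℕ) (s : ℝ) (η : ℝ → E d) : ℝ :=
  sSup { x | ∃ θ : Theta T d, ∃ ℓ : ℝ → ℝ, (θ.t, θ.path) ≠ (0, 0) ∧ ℓ ∈ LL T θ.t s ∧
        x = u θ - (n : ℝ) * Phi T p s η θ ℓ }

/-- A càdlàg path on `[0,T]`: right-continuous with left limits. -/
def Cadlag (T : ℝ) {d : ℕ} (η : ℝ → E d) : Prop :=
  (∀ x ∈ Set.Ico (0:ℝ) T, ContinuousWithinAt η (Set.Ici x) x) ∧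
  (∀ x ∈ Set.Ioc (0:ℝ) T, ∃ l : E d, Filter.Tendsto η (nhdsWithin x (Set.Iio x)) (𝓝 l))

/-- The piecewise constant path `η^{λ_i}(x)_s = Σ_j x_j 1_{{s ≥ s_j}}`. -/
def pcPath {d i : ℕ} (sVec : Fin i → ℝ) (xVec : Fin i → E d) : ℝ → E d :=
  fun r => ∑ j : Fin i, if sVec j ≤ r then xVec j else 0


def scl (t s s' : ℝ) (ℓ : ℝ → ℝ) : ℝ → ℝ := fun r => if r ≤ t then ℓ r * (s' / s) else r - t + s'

theorem LL_pos {T t s : ℝ} (hs : 0 < s) {ℓ : ℝ → ℝ} : ℓ ∈ LL T t s ↔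
    (MonotoneOn ℓ (Set.Icc 0 T) ∧ StrictMonoOn ℓ (Set.Icc 0 t) ∧
        Set.BijOn ℓ (Set.Icc 0 t) (Set.Icc 0 s) ∧ ∀ r ∈ Set.Ioc t T, ℓ r = r - t + s) := by
  simp [LL, hs.ne']

theorem scl_mem {T t s s' : ℝ} (hs : 0 < s) (hs' : 0 < s') {ℓ : ℝ → ℝ}
    (h : ℓ ∈ LL T t s) : scl t s s' ℓ ∈ LL T t s' := by
  rw [LL_pos hs] at h
  rw [LL_pos hs']
  obtain ⟨h1, h2, h3, h4⟩ := h
  have hk : 0 < s' / s := by positivity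
  have hks : s * (s' / s) = s' := by field_simp
  have hstr : StrictMonoOn (scl t s s' ℓ) (Set.Icc 0 t) := by
    intro a ha b hb hab
    simp only [scl, if_pos ha.2, if_pos hb.2]
    exact mul_lt_mul_of_pos_right (h2 ha hb hab) hk
  refine ⟨?_, hstr, ⟨?_, hstr.injOn, ?_⟩, ?_⟩
  · intro a ha b hb hab
    simp only [scl]
    split_ifs with c1 c2
    · exact mul_le_mul_of_nonneg_right (h1 ha hb hab) hk.le
    · have := mul_le_mul_of_nonneg_right (h3.mapsTo ⟨ha.1, c1⟩).2 hk.le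
      rw [hks] at this
      push Not at c2
      linarith
    · linarith
    · linarith
  · intro a ha
    simp only [scl, if_pos ha.2]
    have := h3.mapsTo ha
    refine ⟨mul_nonneg this.1 hk.le, ?_⟩
    have := mul_le_mul_of_nonneg_right this.2 hk.le
    rwa [hks] at this
  · intro y hy
    obtain ⟨a, ha, hay⟩ := h3.surjOn (show y / (s' / s) ∈ Set.Icc 0 s from
      ⟨div_nonneg hy.1 hk.le, by rw [div_le_iff₀ hk, hks]; exact hy.2⟩)
    refine ⟨a, ha, ?_⟩
    simp only [scl, if_pos ha.2, hay]
    field_simp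
  · intro r hr
    simp [scl, not_le.2 hr.1]

theorem id_mem {T t : ℝ} (ht : 0 < t) : (fun r : ℝ => r) ∈ LL T t t := by
  rw [LL_pos ht]
  refine ⟨fun a _ b _ h => h, fun a _ b _ h => h, Set.bijOn_id _, fun r _ => by ring⟩

theorem supId_nonneg (T : ℝ) (ℓ : ℝ → ℝ) : 0 ≤ supId T ℓ :=
  Real.iSup_nonneg fun _ => abs_nonneg _

theorem pnormPow_nonneg {T : ℝ} (hT : 0 < T) (q : ℝ) {d : ℕ} (f : ℝ → E d) :
    0 ≤ pnormPow T q f := by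
  unfold pnormPow
  have := intervalIntegral.integral_nonneg (μ := volume) hT.le
    (fun s _ => Real.rpow_nonneg (norm_nonneg (f s)) q)
  have := Real.rpow_nonneg (norm_nonneg (f T)) q
  linarith

theorem Phi_nonneg {T : ℝ} (hT : 0 < T) (p : ℝ) {d : ℕ} (s : ℝ) (η : ℝ → E d)
    (θ : Theta T d) (ℓ : ℝ → ℝ) : 0 ≤ Phi T p s η θ ℓ :=
  add_nonneg (Real.rpow_nonneg (supId_nonneg _ _) _) (pnormPow_nonneg hT _ _)

theorem supId_le {T : ℝ} (hT : 0 < T) {ℓ ℓ' : ℝ → ℝ} {c K : ℝ}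
    (hb : ∀ r ∈ Set.Icc 0 T, |ℓ r - r| ≤ K)
    (h : ∀ r ∈ Set.Icc 0 T, |ℓ' r - ℓ r| ≤ c) : supId T ℓ' ≤ supId T ℓ + c := by
  have : Nonempty (Set.Icc (0:ℝ) T) := ⟨⟨0, le_rfl, hT.le⟩⟩
  refine ciSup_le fun r => ?_
  have h1 : |ℓ r - (r:ℝ)| ≤ supId T ℓ := by
    refine le_ciSup (f := fun r : Set.Icc (0:ℝ) T => |ℓ r - (r : ℝ)|) ⟨K, ?_⟩ r
    rintro _ ⟨r, rfl⟩
    exact hb r r.2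
  have h2 := h r r.2
  have := abs_add_le (ℓ' r - ℓ r) (ℓ r - r)
  rw [sub_add_sub_cancel] at this
  linarith

theorem pcPath_snoc {d m : ℕ} (sVec : Fin (m + 1) → ℝ) (xs : Fin m → E d) (x : E d) (r : ℝ) :
    pcPath sVec (Fin.snoc xs x : Fin (m+1) → E d) r =
      (∑ j : Fin m, if sVec j.castSucc ≤ r then xs j else 0) +
        if sVec (Fin.last m) ≤ r then x else 0 := by
  simp [pcPath, Fin.sum_univ_castSucc]

theorem ind_tendsto {α : Type*} {F : Filter α} {V : Type*} [NormedAddCommGroup V] {g : α → ℝ}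
    {y0 c : ℝ} (hg : Tendsto g F (𝓝 y0))
    (hge : ∀ᶠ q in F, y0 ≤ g q) {v : α → V} {v0 : V} (hv : Tendsto v F (𝓝 v0)) :
    Tendsto (fun q => if c ≤ g q then v q else 0) F (𝓝 (if c ≤ y0 then v0 else 0)) := by
  split_ifs with h
  · refine hv.congr' ?_
    filter_upwards [hge] with q hq
    rw [if_pos (h.trans hq)]
  · refine tendsto_const_nhds.congr' ?_
    filter_upwards [hg.eventually_lt_const (not_le.1 h)] with q hq
    rw [if_neg (not_le.2 hq)]

theorem pcPath_tendsto {d m : ℕ} (sVec : Fin (m + 1) → ℝ) (xs : Fin m → E d) {α : Type*}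
    {F : Filter α} {g : α → ℝ} {y0 : ℝ} (hg : Tendsto g F (𝓝 y0))
    (hge : ∀ᶠ q in F, y0 ≤ g q) {v : α → E d} {v0 : E d} (hv : Tendsto v F (𝓝 v0)) :
    Tendsto (fun q => pcPath sVec (Fin.snoc xs (v q) : Fin (m+1) → E d) (g q)) F
      (𝓝 (pcPath sVec (Fin.snoc xs v0 : Fin (m+1) → E d) y0)) := by
  simp only [pcPath_snoc]
  exact (tendsto_finsetSum _ fun j _ => ind_tendsto hg hge tendsto_const_nhds).add
    (ind_tendsto hg hge hv)

theorem pcPath_bound {d m : ℕ} (sVec : Fin (m + 1) → ℝ) (xs : Fin m → E d) (x : E d) (r : ℝ) :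
    ‖pcPath sVec (Fin.snoc xs x : Fin (m+1) → E d) r‖ ≤ (∑ j, ‖xs j‖) + ‖x‖ := by
  rw [pcPath_snoc]
  refine (norm_add_le _ _).trans (add_le_add ((norm_sum_le _ _).trans
    (Finset.sum_le_sum fun j _ => ?_)) ?_)
  · split_ifs <;> simp
  · split_ifs <;> simp

theorem pcPath_meas {d m : ℕ} (sVec : Fin m → ℝ) (xs : Fin m → E d) :
    Measurable (pcPath sVec xs) := by
  unfold pcPath
  refine Finset.measurable_sum _ fun j _ => ?_
  exact Measurable.ite measurableSet_Ici measurable_const measurable_const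

theorem key_tendsto {T : ℝ} (hT : 0 < T) {d : ℕ} {p : ℝ} (hp : 1 ≤ p) {m : ℕ}
    (sVec : Fin (m + 1) → ℝ) (xs : Fin m → E d) (x : E d) (θ : Theta T d) {s : ℝ}
    {ℓ : ℝ → ℝ} {L : ℝ × E d → ℝ → ℝ}
    (hL : ∀ᶠ q in (𝓝[>] s) ×ˢ (𝓝 x), MonotoneOn (L q) (Icc 0 T))
    (hc : ∀ᶠ q in (𝓝[>] s) ×ˢ (𝓝 x), ∀ r ∈ Icc 0 T, ℓ r ≤ L q r ∧ L q r ≤ ℓ r + (q.1 - s)) :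
    Tendsto (fun q : ℝ × E d => pnormPow T (p + 1) (fun r =>
      pcPath sVec (Fin.snoc xs q.2 : Fin (m+1) → E d) (min q.1 (L q r)) - θ.path (min θ.t r)))
      ((𝓝[>] s) ×ˢ (𝓝 x))
      (𝓝 (pnormPow T (p + 1) (fun r =>
      pcPath sVec (Fin.snoc xs x : Fin (m+1) → E d) (min s (ℓ r)) - θ.path (min θ.t r)))) := by
  have hp0 : 0 < p + 1 := by linarith
  have hq1 : Tendsto (fun q : ℝ × E d => q.1) ((𝓝[>] s) ×ˢ (𝓝 x)) (𝓝 s) :=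
    tendsto_fst.mono_right nhdsWithin_le_nhds
  have hgt : ∀ᶠ q : ℝ × E d in (𝓝[>] s) ×ˢ (𝓝 x), s < q.1 :=
    tendsto_fst.eventually (eventually_mem_nhdsWithin)
  have hq2 : Tendsto (fun q : ℝ × E d => q.2) ((𝓝[>] s) ×ˢ (𝓝 x)) (𝓝 x) := tendsto_snd
  have hcont : ContinuousOn (fun r => θ.path (min θ.t r)) (Icc 0 T) := by
    refine θ.cont.comp (continuous_const.min continuous_id).continuousOn ?_
    intro r hr
    exact ⟨le_min θ.ht.1 hr.1, (min_le_left _ _).trans θ.ht.2⟩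
  obtain ⟨C, hC⟩ := isCompact_Icc.exists_bound_of_continuousOn hcont
  have hpt : ∀ r ∈ Icc 0 T, Tendsto (fun q : ℝ × E d =>
      ‖pcPath sVec (Fin.snoc xs q.2 : Fin (m+1) → E d) (min q.1 (L q r)) - θ.path (min θ.t r)‖
        ^ (p+1)) ((𝓝[>] s) ×ˢ (𝓝 x))
      (𝓝 (‖pcPath sVec (Fin.snoc xs x : Fin (m+1) → E d) (min s (ℓ r)) - θ.path (min θ.t r)‖
        ^ (p+1))) := by
    intro r hr
    refine Tendsto.rpow_const ?_ (Or.inr hp0.le)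
    refine (Tendsto.sub_const ?_ _).norm
    refine pcPath_tendsto sVec xs (Tendsto.min hq1 ?_) ?_ hq2
    · have h1 : Tendsto (fun q : ℝ × E d => ℓ r + (q.1 - s)) ((𝓝[>] s) ×ˢ (𝓝 x)) (𝓝 (ℓ r)) := by
        have := (hq1.sub_const s).const_add (ℓ r)
        simpa using this
      refine tendsto_of_tendsto_of_tendsto_of_le_of_le' tendsto_const_nhds h1 ?_ ?_
      · filter_upwards [hc] with q hq using (hq r hr).1
      · filter_upwards [hc] with q hq using (hq r hr).2
    · filter_upwards [hc, hgt] with q hq hs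
      exact min_le_min hs.le (hq r hr).1
  unfold pnormPow
  refine (hpt T ⟨hT.le, le_rfl⟩).add ?_
  refine intervalIntegral.tendsto_integral_filter_of_dominated_convergence
    (fun _ => ((∑ j, ‖xs j‖) + (‖x‖ + 1) + C) ^ (p+1)) ?_ ?_ ?_ ?_
  · filter_upwards [hL] with q hq
    rw [uIoc_of_le hT.le]
    have hm : AEMeasurable (L q) (volume.restrict (Ioc 0 T)) :=
      aemeasurable_restrict_of_monotoneOn measurableSet_Ioc (hq.mono Ioc_subset_Icc_self)
    have h2 : AEMeasurable (fun r => θ.path (min θ.t r)) (volume.restrict (Ioc 0 T)) :=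
      (hcont.mono Ioc_subset_Icc_self).aemeasurable measurableSet_Ioc
    have h3 : AEMeasurable (fun r => pcPath sVec (Fin.snoc xs q.2 : Fin (m+1) → E d)
        (min q.1 (L q r))) (volume.restrict (Ioc 0 T)) :=
      (pcPath_meas _ _).comp_aemeasurable (aemeasurable_const.min hm)
    exact ((h3.sub h2).norm.pow_const _).aestronglyMeasurable
  · have : ∀ᶠ q : ℝ × E d in (𝓝[>] s) ×ˢ (𝓝 x), ‖q.2‖ < ‖x‖ + 1 :=
      hq2.norm.eventually_lt_const (by linarith)
    filter_upwards [this] with q hq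
    refine Eventually.of_forall fun r hr => ?_
    rw [uIoc_of_le hT.le] at hr
    rw [Real.norm_of_nonneg (Real.rpow_nonneg (norm_nonneg _) _)]
    refine Real.rpow_le_rpow (norm_nonneg _) ?_ hp0.le
    have h1 := pcPath_bound sVec xs q.2 (min q.1 (L q r))
    have h2 := hC r (Ioc_subset_Icc_self hr)
    refine (norm_sub_le _ _).trans ?_
    linarith
  · simp
  · refine Eventually.of_forall fun r hr => ?_
    rw [uIoc_of_le hT.le] at hr
    exact hpt r (Ioc_subset_Icc_self hr)

theorem LL_bound {T t s : ℝ} (hs : 0 ≤ s) (ht : t ∈ Icc 0 T) {ℓ : ℝ → ℝ} (h : ℓ ∈ LL T t s) :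
    ∀ r ∈ Icc 0 T, |ℓ r - r| ≤ s + T := by
  intro r hr
  have hr1 := hr.1
  have hr2 := hr.2
  have ht1 := ht.1
  have ht2 := ht.2
  rcases hs.eq_or_lt with rfl | hs
  · simp only [LL, if_true, mem_singleton_iff] at h
    subst h
    rw [abs_le]
    dsimp only
    split_ifs <;> constructor <;> linarith
  · obtain ⟨h1, h2, h3, h4⟩ := (LL_pos hs).1 h
    rw [abs_le]
    by_cases hc : r ≤ t
    · have := h3.mapsTo ⟨hr1, hc⟩
      have a := this.1
      have b := this.2
      constructor <;> linarith
    · push Not at hc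
      rw [h4 r ⟨hc, hr2⟩]
      constructor <;> linarith

/-- the zero path at time `t` -/
def zeroTheta (T : ℝ) (d : ℕ) (t : ℝ) (ht : t ∈ Icc 0 T) : Theta T d :=
  ⟨t, 0, ht, continuousOn_const, rfl⟩

theorem le_reg {T : ℝ} (hT : 0 < T) {d : ℕ} {p : ℝ} {u : Theta T d → ℝ} {M : ℝ}
    (hM : ∀ θ, |u θ| ≤ M) {n : ℕ} {s : ℝ} {η : ℝ → E d} {θ : Theta T d} {ℓ : ℝ → ℝ}
    (h0 : (θ.t, θ.path) ≠ (0, 0)) (hℓ : ℓ ∈ LL T θ.t s) :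
    u θ - n * Phi T p s η θ ℓ ≤ reg T p u n s η := by
  refine le_csSup ⟨M, ?_⟩ ⟨θ, ℓ, h0, hℓ, rfl⟩
  rintro _ ⟨θ, ℓ, -, -, rfl⟩
  have := mul_nonneg (Nat.cast_nonneg (α := ℝ) n) (Phi_nonneg hT p s η θ ℓ)
  have := (abs_le.1 (hM θ)).2
  linarith

theorem reg_le {T : ℝ} (hT : 0 < T) {d : ℕ} {p : ℝ} {u : Theta T d → ℝ} {M : ℝ}
    (hM : ∀ θ, |u θ| ≤ M) (n : ℕ) (s : ℝ) (η : ℝ → E d) :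
    reg T p u n s η ≤ M := by
  refine Real.sSup_le ?_ ((abs_nonneg _).trans (hM (zeroTheta T d 0 ⟨le_rfl, hT.le⟩)))
  rintro _ ⟨θ, ℓ, -, -, rfl⟩
  have := mul_nonneg (Nat.cast_nonneg (α := ℝ) n) (Phi_nonneg hT p s η θ ℓ)
  have := (abs_le.1 (hM θ)).2
  linarith

theorem LL_nonempty {T t s : ℝ} (ht : 0 < t) (hs : 0 ≤ s) : ∃ ℓ, ℓ ∈ LL T t s := by
  rcases hs.eq_or_lt with rfl | hs
  · exact ⟨_, by simp only [LL, if_true]; rfl⟩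
  · exact ⟨_, scl_mem ht hs (id_mem ht)⟩

/-- existence of approximating time changes -/
theorem exists_family {T t s : ℝ} (ht : 0 < t) (hs : 0 ≤ s) {ℓ : ℝ → ℝ} (h : ℓ ∈ LL T t s) :
    ∃ L : ℝ → ℝ → ℝ, ∀ s', s < s' → L s' ∈ LL T t s' ∧
      ∀ r ∈ Icc 0 T, ℓ r ≤ L s' r ∧ L s' r ≤ ℓ r + (s' - s) := by
  rcases hs.eq_or_lt with rfl | hs
  · simp only [LL, if_true, mem_singleton_iff] at h
    subst h
    refine ⟨fun s' => scl t t s' (fun r => r), fun s' hs' => ⟨scl_mem ht hs' (id_mem ht), ?_⟩⟩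
    intro r hr
    have hk : 0 ≤ s' / t := by positivity
    have hks : t * (s' / t) = s' := by field_simp
    simp only [scl]
    split_ifs with hc
    · have := mul_le_mul_of_nonneg_right hc hk
      have := mul_nonneg hr.1 hk
      constructor <;> linarith
    · constructor <;> linarith
  · refine ⟨fun s' => scl t s s' ℓ, fun s' hs' => ⟨scl_mem hs (hs.trans hs') h, ?_⟩⟩
    obtain ⟨h1, h2, h3, h4⟩ := (LL_pos hs).1 h
    intro r hr
    simp only [scl]
    split_ifs with hc
    · have hm := h3.mapsTo ⟨hr.1, hc⟩
      have e : ℓ r * (s' / s) = ℓ r + ℓ r * ((s' - s) / s) := by field_simp; ring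
      have hk : 0 ≤ (s' - s) / s := div_nonneg (by linarith) hs.le
      have hks : s * ((s' - s) / s) = s' - s := by field_simp
      have a := mul_nonneg hm.1 hk
      have b := mul_le_mul_of_nonneg_right hm.2 hk
      rw [e]
      constructor <;> linarith
    · rw [h4 r ⟨not_le.1 hc, hr.2⟩]
      constructor <;> linarith

/-- (Lemma 5.7 (iii)) For bounded, `d_p`-uniformly continuous `u`, the function
`u^{n,λ_i}` is lower semicontinuous at the initial time `s_i`:
`u^{n,λ_i}(s_i, x) ≤ liminf_{s' ↓ s_i, x' → x} u^{n,λ_i}(s', x')`. -/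
theorem stmt10 (T : ℝ) (hT : 0 < T) (d : ℕ) (hd : 1 ≤ d) (p : ℝ) (hp : 1 ≤ p)
    (u : Theta T d → ℝ) (hub : ∃ M : ℝ, ∀ θ : Theta T d, |u θ| ≤ M)
    (ρ : ℝ → ℝ) (hmono : Monotone ρ)
    (hρ0 : Filter.Tendsto ρ (nhdsWithin 0 (Set.Ioi 0)) (𝓝 0))
    (huc : ∀ θ θ' : Theta T d, |u θ - u θ'| ≤ ρ (dpDist T p θ θ'))
    (n : ℕ) (hn : 1 ≤ n)
    (m : ℕ) (sVec : Fin (m + 1) → ℝ) (hs0 : sVec 0 = 0) (hsmono : StrictMono sVec)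
    (hsT : sVec (Fin.last m) ≤ T) (xs : Fin m → E d) (x : E d) :
    reg T p u n (sVec (Fin.last m)) (pcPath sVec (Fin.snoc xs x)) ≤
      Filter.liminf
        (fun q : ℝ × E d => reg T p u n q.1 (pcPath sVec (Fin.snoc xs q.2)))
        ((nhdsWithin (sVec (Fin.last m)) (Set.Ioi (sVec (Fin.last m)))) ×ˢ (𝓝 x)) := by
  obtain ⟨M, hM⟩ := hub
  have hs : 0 ≤ sVec (Fin.last m) := hs0 ▸ hsmono.monotone (Fin.zero_le _)
  have hp0 : 0 < p + 1 := by linarith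
  have hexp : 0 < 2 / (3 * p + 3) := by positivity
  have hq1 : Tendsto (fun q : ℝ × E d => q.1)
      ((𝓝[>] (sVec (Fin.last m))) ×ˢ (𝓝 x)) (𝓝 (sVec (Fin.last m))) :=
    tendsto_fst.mono_right nhdsWithin_le_nhds
  have hgt : ∀ᶠ q : ℝ × E d in (𝓝[>] (sVec (Fin.last m))) ×ˢ (𝓝 x), sVec (Fin.last m) < q.1 :=
    tendsto_fst.eventually (eventually_mem_nhdsWithin)
  refine le_of_forall_lt fun a ha => ?_
  obtain ⟨b, hab, hb⟩ := exists_between ha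
  refine hab.trans_le ?_
  refine le_liminf_of_le ?_ ?_
  · refine IsBoundedUnder.isCoboundedUnder_ge ⟨M, ?_⟩
    exact eventually_map.2 (Eventually.of_forall fun q => reg_le hT hM n _ _)
  obtain ⟨_, ⟨θ, ℓ, hθ, hℓ, rfl⟩, hbθ⟩ := exists_lt_of_lt_csSup (by
    obtain ⟨ℓ, hℓ⟩ := LL_nonempty (T := T) hT hs
    exact ⟨_, zeroTheta T d T ⟨hT.le, le_rfl⟩, ℓ, by simp [zeroTheta, hT.ne'], hℓ, rfl⟩) hb
  rcases θ.ht.1.eq_or_lt with ht0 | ht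
  · -- `t = 0`, hence `s = 0`
    have hsz : sVec (Fin.last m) = 0 := by
      by_contra hne
      have hpos := lt_of_le_of_ne hs (Ne.symm hne)
      obtain ⟨h1, h2, h3, h4⟩ := (LL_pos hpos).1 hℓ
      obtain ⟨a1, ha1, e1⟩ := h3.surjOn (show (0:ℝ) ∈ _ from ⟨le_rfl, hs⟩)
      obtain ⟨a2, ha2, e2⟩ := h3.surjOn (right_mem_Icc.2 hs)
      rw [← ht0] at ha1 ha2
      have : a1 = a2 := by rw [le_antisymm ha1.2 ha1.1, le_antisymm ha2.2 ha2.1]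
      rw [this, e2] at e1
      exact hne e1
    have hkey := key_tendsto hT hp sVec xs x (zeroTheta T d 0 ⟨le_rfl, hT.le⟩)
      (s := sVec (Fin.last m)) (ℓ := fun r => r) (L := fun q r => r)
      (Eventually.of_forall fun q a _ b _ h => h) (by
        filter_upwards [hgt] with q hq r hr
        constructor <;> linarith)
    have hPhi : pnormPow T (p + 1) (fun r => pcPath sVec (Fin.snoc xs x : Fin (m+1) → E d)
        (min (sVec (Fin.last m)) r) - (zeroTheta T d 0 ⟨le_rfl, hT.le⟩).path (min 0 r)) ≤
        Phi T p (sVec (Fin.last m)) (pcPath sVec (Fin.snoc xs x)) θ ℓ := by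
      unfold Phi
      have e : ∀ r ∈ Icc 0 T, pcPath sVec (Fin.snoc xs x : Fin (m+1) → E d)
        (min (sVec (Fin.last m)) r) - (zeroTheta T d 0 ⟨le_rfl, hT.le⟩).path (min 0 r) =
          pcPath sVec (Fin.snoc xs x : Fin (m+1) → E d) (min (sVec (Fin.last m)) (ℓ r))
            - θ.path (min θ.t r) := by
        intro r hr
        rw [hsz] at hℓ ⊢
        simp only [LL, if_true, mem_singleton_iff] at hℓ
        have hl : 0 ≤ ℓ r := by
          subst hℓ
          dsimp only
          split_ifs <;> linarith [hr.1]
        rw [← ht0, min_eq_left hr.1, min_eq_left hl, θ.init]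
        rfl
      have e2 : ∀ f g : ℝ → E d, (∀ r ∈ Icc 0 T, f r = g r) →
          pnormPow T (p+1) f = pnormPow T (p+1) g := by
        intro f g hfg
        unfold pnormPow
        rw [hfg T ⟨hT.le, le_rfl⟩]
        congr 1
        refine intervalIntegral.integral_congr fun r hr => ?_
        rw [uIcc_of_le hT.le] at hr
        simp only [hfg r hr]
      rw [e2 _ _ e]
      have := Real.rpow_nonneg (supId_nonneg T ℓ) (2 / (3 * p + 3))
      linarith
    have hρ' : Tendsto (fun q : ℝ × E d => ρ q.1)
        ((𝓝[>] (sVec (Fin.last m))) ×ˢ (𝓝 x)) (𝓝 0) := by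
      rw [hsz]
      exact hρ0.comp tendsto_fst
    have hlim := (hρ'.const_sub (u θ)).sub (hkey.const_mul (n:ℝ))
    have hlt := hlim.eventually_const_lt (u := b) (by
      have := mul_le_mul_of_nonneg_left hPhi (Nat.cast_nonneg (α := ℝ) n)
      refine hbθ.trans_le ?_
      simp only [sub_zero]
      exact sub_le_sub_left this _)
    have hqT : ∀ᶠ q : ℝ × E d in (𝓝[>] (sVec (Fin.last m))) ×ˢ (𝓝 x), q.1 < T :=
      hq1.eventually_lt_const (hsz ▸ hT)
    filter_upwards [hlt, hqT, hgt] with q hlt hqT hgt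
    rw [hsz] at hgt
    set θ' := zeroTheta T d q.1 ⟨hgt.le, hqT.le⟩ with hθ'
    have h1 := le_reg (p := p) (n := n) (s := q.1) (η := pcPath sVec (Fin.snoc xs q.2)) (θ := θ') hT hM
      (by simp [hθ', zeroTheta, hgt.ne']) (id_mem hgt)
    refine le_trans ?_ h1
    have hd : dpDist T p θ θ' = q.1 := by
      have hz : pnorm T p (fun s => θ.path (min θ.t s) - θ'.path (min θ'.t s)) = 0 := by
        have e0 : ∀ r ∈ Icc 0 T, θ.path (min θ.t r) - θ'.path (min θ'.t r) = 0 := by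
          intro r hr
          rw [← ht0, min_eq_left hr.1, θ.init]
          simp [hθ', zeroTheta]
        have hpz : (0:ℝ) ^ p = 0 := Real.zero_rpow (by linarith)
        unfold pnorm pnormPow
        have : ∫ s in (0:ℝ)..T, ‖θ.path (min θ.t s) - θ'.path (min θ'.t s)‖ ^ p
            = ∫ s in (0:ℝ)..T, (0:ℝ) := by
          refine intervalIntegral.integral_congr fun r hr => ?_
          rw [uIcc_of_le hT.le] at hr
          simp only [e0 r hr, norm_zero, hpz]
        beta_reduce
        rw [this, e0 T ⟨hT.le, le_rfl⟩]
        simp only [norm_zero, hpz, intervalIntegral.integral_zero, add_zero]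
        exact Real.zero_rpow (by positivity)
      unfold dpDist
      rw [hz, ← ht0]
      simp [hθ', zeroTheta, abs_of_pos hgt]
    have hu := (abs_le.1 (huc θ θ')).2
    rw [hd] at hu
    have hsup : supId T (fun r => r) = 0 := by simp [supId]
    have hP : Phi T p q.1 (pcPath sVec (Fin.snoc xs q.2)) θ' (fun r => r) =
        pnormPow T (p + 1) (fun r => pcPath sVec (Fin.snoc xs q.2 : Fin (m+1) → E d)
        (min q.1 r) - (zeroTheta T d 0 ⟨le_rfl, hT.le⟩).path (min 0 r)) := by
      unfold Phi
      rw [hsup, Real.zero_rpow hexp.ne', zero_add]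
      rfl
    rw [hP]
    have hlt' : b < u θ - ρ q.1 - n * pnormPow T (p + 1) (fun r =>
        pcPath sVec (Fin.snoc xs q.2 : Fin (m+1) → E d)
        (min q.1 r) - (zeroTheta T d 0 ⟨le_rfl, hT.le⟩).path (min 0 r)) := hlt
    linarith
  · obtain ⟨L, hL⟩ := exists_family ht hs hℓ
    have hkey := key_tendsto hT hp sVec xs x θ
      (s := sVec (Fin.last m)) (ℓ := ℓ) (L := fun q => L q.1) (by
        filter_upwards [hgt] with q hq
        exact ((LL_pos (hs.trans_lt hq)).1 (hL q.1 hq).1).1) (by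
        filter_upwards [hgt] with q hq
        exact (hL q.1 hq).2)
    have hsup : Tendsto (fun q : ℝ × E d =>
        (supId T ℓ + (q.1 - sVec (Fin.last m))) ^ (2 / (3 * p + 3)))
        ((𝓝[>] (sVec (Fin.last m))) ×ˢ (𝓝 x)) (𝓝 ((supId T ℓ) ^ (2 / (3 * p + 3)))) := by
      refine Tendsto.rpow_const ?_ (Or.inr hexp.le)
      simpa using (hq1.sub_const (sVec (Fin.last m))).const_add (supId T ℓ)
    have hlim := ((hsup.add hkey).const_mul (n:ℝ)).const_sub (u θ)
    filter_upwards [hlim.eventually_const_lt hbθ, hgt] with q hlt hgt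
    refine hlt.le.trans (le_trans ?_ (le_reg hT hM hθ (hL q.1 hgt).1))
    refine sub_le_sub_left (mul_le_mul_of_nonneg_left ?_ (Nat.cast_nonneg _)) _
    refine add_le_add (Real.rpow_le_rpow (supId_nonneg _ _) ?_ hexp.le) le_rfl
    refine supId_le hT (LL_bound hs θ.ht hℓ) fun r hr => ?_
    have h := (hL q.1 hgt).2 r hr
    rw [abs_le]
    constructor <;> linarith [h.1, h.2]
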